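/- arXiv:0910.1411 — 2 statements merged into one kernel-verified Lean document; each statement's English description precedes it below -/
import Mathlib

section
/- (Proposition 2.2) Let φ be an Euler system for S, let m ≥ 1 be coprime to every prime in S, and let η ∈ μ_m. Let p be a rational prime with p ∤ m and p ∉ S. For each n ≥ 0 let ζ_n be a primitive p^{n+1}-th root of unity with ζ_{n+1}^p = ζ_n, and for n ≥ 0 let c_n be an integer with c_n p^n ≡ 1 (mod m) (so η ↦ η^{c_n} realizes Frob_p^{−n} on μ_m). Then for every n ≥ 1, N_{H_{mp^{n+1}}/H_{mp^n}}(φ(ζ_n η^{c_n})) = φ(ζ_{n−1} η^{c_{n−1}}); that is, the sequence φ(ζ_n η^{Frob_p^{−n}}), n = 0, 1, 2, …, is norm compatible in the tower of fields H_{mp^{n+1}}. -/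
/-!
An automorphism of `ℚ̄` restricts to the identity on `H_n` exactly when it acts on `μ_n` as `1`
or as inversion; hence an even Galois-equivariant `φ` takes values in `H_n` on `μ_n`.
Let `d ∣ N`, `3 ≤ N`, and let `ω` be a primitive `Nd`-th root of unity. Every `ξω` with `ξ ∈ μ_d`
is again one, so it is a conjugate of `ω`, and `σ ω = ξω` forces `σ` to fix `μ_N`. These `σ`
represent the `H_N`-embeddings of `H_{Nd}`, each once: the bound `3 ≤ N` prevents two of the `ξω`
from being inverse to each other. Since `ζ_{k+1} η^{c_{k+1}}` is such an `ω` times an element of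
`μ_N`, where `N = m p^{k+1}`, the norm of its image under `φ` is the product over `μ_p` in the
distribution relation (E2).
-/

open scoped BigOperators

noncomputable section

abbrev Qbar : Type := AlgebraicClosure ℚ

/-- `W_S`: the roots of unity in `ℚ̄` whose order is coprime to every prime in `S`. -/
def WS (S : Finset ℕ) : Set Qbar :=
  {ζ : Qbar | ∃ n : ℕ, 0 < n ∧ (∀ q ∈ S, Nat.Coprime n q) ∧ ζ ^ n = 1}

/-- Congruence of two algebraic numbers modulo a prime ideal `𝔭` of the ring of all
algebraic integers: `x ≡ y mod 𝔭` in the usual (localized) sense.  This encodes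
congruence modulo the prime `𝔭 ∩ 𝒪_K` of any number field `K` containing `x` and `y`. -/
def congMod (𝔭 : Ideal (integralClosure ℤ Qbar)) (x y : Qbar) : Prop :=
  ∃ c : integralClosure ℤ Qbar, c ∉ 𝔭 ∧ ∃ u : integralClosure ℤ Qbar, u ∈ 𝔭 ∧
    (x - y) * (c : Qbar) = (u : Qbar)

/-- An Euler system for a finite set `S` of rational primes containing `2`:
a map `φ : W_S → ℚ̄ˣ` satisfying the axioms (E1), (E2), (E3). -/
structure IsEulerSystem (S : Finset ℕ) (φ : Qbar → Qbar) : Prop where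
  two_mem : 2 ∈ S
  prime_mem : ∀ q ∈ S, Nat.Prime q
  ne_zero : ∀ η ∈ WS S, φ η ≠ 0
  /-- (E1a): Galois equivariance. -/
  galois_equivariant : ∀ σ : Qbar ≃ₐ[ℚ] Qbar, ∀ η ∈ WS S, φ (σ η) = σ (φ η)
  /-- (E1b): `φ(η⁻¹) = φ(η)`. -/
  map_inv : ∀ η ∈ WS S, φ η⁻¹ = φ η
  /-- (E2): the norm relation `∏_{ζ ∈ μ_p} φ(ζη) = φ(η^p)` for primes `p ∉ S`. -/
  norm_relation : ∀ p : ℕ, p.Prime → p ∉ S → ∀ η ∈ WS S,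
    (∏ᶠ (ζ : Qbar) (_ : ζ ^ p = 1), φ (ζ * η)) = φ (η ^ p)
  /-- (E3): the congruence `φ(ζη) ≡ φ(η) mod 𝔭` for all primes `𝔭` above `p ∉ S`,
  whenever `η` has order prime to `p` and `ζ ∈ μ_p`. -/
  congruence : ∀ p : ℕ, p.Prime → p ∉ S → ∀ η ∈ WS S,
    (∃ n : ℕ, 0 < n ∧ ¬ p ∣ n ∧ η ^ n = 1) →
    ∀ ζ : Qbar, ζ ^ p = 1 →
    ∀ 𝔭 : Ideal (integralClosure ℤ Qbar), 𝔭.IsMaximal → (p : integralClosure ℤ Qbar) ∈ 𝔭 →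
      congMod 𝔭 (φ (ζ * η)) (φ η)

/-- `H_m = ℚ(μ_m)⁺`, the maximal real subfield of the `m`-th cyclotomic field, realized
inside `ℚ̄` as the field generated by the elements `ζ + ζ⁻¹` for `ζ ∈ μ_m`. -/
def Hplus (m : ℕ) : IntermediateField ℚ Qbar :=
  IntermediateField.adjoin ℚ {x : Qbar | ∃ ζ : Qbar, ζ ^ m = 1 ∧ x = ζ + ζ⁻¹}

-- Instance search finds `DivisionRing.toRatAlgebra` for `Algebra ℚ Qbar`, whereas
-- `AlgebraicClosure.isAlgebraic` is about the propositionally equal `AlgebraicClosure.instAlgebra`.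
instance Qbar.isAlgebraic : Algebra.IsAlgebraic ℚ Qbar := by
  have algebra_eq : AlgebraicClosure.instAlgebra ℚ = DivisionRing.toRatAlgebra (R := Qbar) :=
    Subsingleton.elim _ _
  exact algebra_eq ▸ AlgebraicClosure.isAlgebraic ℚ

instance Qbar.isAlgClosure : IsAlgClosure ℚ Qbar := ⟨inferInstance, inferInstance⟩

instance Qbar.normal : Normal ℚ Qbar := IsAlgClosure.normal ℚ Qbar

theorem add_inv_eq_add_inv_iff {K : Type*} [Field K] {a b : K} (ha : a ≠ 0) (hb : b ≠ 0) :
    a + a⁻¹ = b + b⁻¹ ↔ a = b ∨ a = b⁻¹ := by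
  have factor : (a - b) * (a * b - 1) = (a + a⁻¹ - (b + b⁻¹)) * (a * b) := by
    field_simp
    ring
  rw [← sub_eq_zero, ← mul_eq_zero_iff_right (mul_ne_zero ha hb), ← factor, mul_eq_zero,
    sub_eq_zero, sub_eq_zero, mul_eq_one_iff_eq_inv₀ hb]

theorem zpow_eq_zpow_of_dvd_sub {G : Type*} [GroupWithZero G] {y : G} {m : ℕ} (hm : m ≠ 0)
    (hy : y ^ m = 1) {a b : ℤ} (h : (m : ℤ) ∣ a - b) : y ^ a = y ^ b := by
  have hy₀ : y ≠ 0 := (IsUnit.of_pow_eq_one hy hm).ne_zero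
  obtain ⟨t, ht⟩ := h
  rw [sub_eq_iff_eq_add'.mp ht, zpow_add₀ hy₀, zpow_mul, zpow_natCast, hy, one_zpow, mul_one]

theorem dvd_mul_sub_of_dvd_mul_sub_one {R : Type*} [CommRing R] {m a b q d : R}
    (ha : m ∣ a * (q * d) - 1) (hb : m ∣ b * q - 1) : m ∣ a * d - b := by
  have key : a * d - b = b * (a * (q * d) - 1) - a * d * (b * q - 1) := by ring
  rw [key]
  exact dvd_sub (ha.mul_left _) (hb.mul_left _)

theorem isPrimitiveRoot_mul_of_pow_eq_one {M : Type*} [CommMonoid M] {N d : ℕ} (hd : 0 < d)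
    (hdN : d ∣ N) {ω ξ : M} (hω : IsPrimitiveRoot ω (N * d)) (hξ : ξ ^ d = 1) :
    IsPrimitiveRoot (ξ * ω) (N * d) := by
  refine ⟨?_, fun l hl ↦ ?_⟩
  · rw [mul_pow, hω.pow_eq_one, mul_comm N, pow_mul, hξ, one_pow, one_mul]
  · have hNl : N ∣ l := by
      refine Nat.dvd_of_mul_dvd_mul_right hd (hω.dvd_of_pow_eq_one _ ?_)
      calc ω ^ (l * d) = (ξ * ω) ^ (l * d) := by
            rw [mul_pow, mul_comm l, pow_mul ξ, hξ, one_pow, one_mul]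
        _ = 1 := by rw [pow_mul, hl, one_pow]
    obtain ⟨t, rfl⟩ := hdN.trans hNl
    refine hω.dvd_of_pow_eq_one _ ?_
    rwa [mul_pow, pow_mul ξ, hξ, one_pow, one_mul] at hl

theorem mul_mul_mul_ne_one_of_isPrimitiveRoot {M : Type*} [CommMonoid M] {N d : ℕ} (hN : 3 ≤ N)
    (hd : 0 < d) {ω ξ ξ' : M} (hω : IsPrimitiveRoot ω (N * d)) (hξ : ξ ^ d = 1)
    (hξ' : ξ' ^ d = 1) :
    ξ * ω * (ξ' * ω) ≠ 1 := by
  intro h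
  have pow_eq_one : ω ^ (2 * d) = 1 := by
    calc ω ^ (2 * d) = (ξ * ω * (ξ' * ω)) ^ d := by
          simp only [mul_pow, hξ, hξ', one_mul, two_mul, pow_add]
      _ = 1 := by rw [h, one_pow]
  have N_dvd_two : N ∣ 2 := Nat.dvd_of_mul_dvd_mul_right hd (hω.dvd_of_pow_eq_one _ pow_eq_one)
  have := Nat.le_of_dvd two_pos N_dvd_two
  lia

theorem exists_eq_isPrimitiveRoot_mul {K : Type*} [Field K] {m n : ℕ} [NeZero m]
    [HasEnoughRootsOfUnity K m] (hmn : m.Coprime n) {x y : K} (hx : IsPrimitiveRoot x n)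
    (hy : y ^ m = 1) :
    ∃ ω z : K, IsPrimitiveRoot ω (m * n) ∧ z ^ m = 1 ∧ x * y = ω * z := by
  obtain ⟨ε, hε⟩ := HasEnoughRootsOfUnity.exists_primitiveRoot K m
  refine ⟨ε * x, ε⁻¹ * y, ?_, ?_, ?_⟩
  · rw [hε.eq_orderOf, hx.eq_orderOf] at hmn ⊢
    rw [← (Commute.all ε x).orderOf_mul_eq_mul_orderOf_of_coprime hmn]
    exact .orderOf _
  · rw [mul_pow, inv_pow, hε.pow_eq_one, hy, inv_one, one_mul]
  · rw [mul_assoc, mul_left_comm x, mul_inv_cancel_left₀ (hε.ne_zero (NeZero.ne m))]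

theorem exists_algEquiv_apply_eq_of_isPrimitiveRoot {L : Type*} [Field L] [CharZero L]
    [Normal ℚ L] {n : ℕ} (hn : 0 < n) {ω ω' : L} (hω : IsPrimitiveRoot ω n)
    (hω' : IsPrimitiveRoot ω' n) : ∃ σ : Gal(L/ℚ), σ ω = ω' := by
  refine isConjRoot_iff_exists_algEquiv.mp ?_
  rw [IsConjRoot, ← Polynomial.cyclotomic_eq_minpoly_rat hω hn,
    ← Polynomial.cyclotomic_eq_minpoly_rat hω' hn]

theorem norm_eq_finprod_of_existsUnique {F L ι : Type*} [Field F] [Field L] [Algebra F L]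
    [IsAlgClosed L] [Algebra.IsSeparable F L] (E : IntermediateField F L) [FiniteDimensional F E]
    (τ : ι → Gal(L/F)) (hτ : ∀ σ : Gal(L/F), ∃! i, ∀ x ∈ E, σ x = τ i x) (x : E) :
    algebraMap F L (Algebra.norm F x) = ∏ᶠ i, τ i x := by
  let e (i : ι) : E →ₐ[F] L := (τ i : L →ₐ[F] L).comp E.val
  have e_injective : Function.Injective e := fun i j hij ↦
    (hτ (τ i)).unique (fun _ _ ↦ rfl) fun y hy ↦ DFunLike.congr_fun hij ⟨y, hy⟩
  have e_surjective : Function.Surjective e := by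
    intro f
    obtain ⟨g, rfl⟩ := IsAlgClosed.surjective_domRestrict_of_isAlgebraic (E := L) f
    obtain ⟨i, hi, -⟩ := hτ (.ofBijective g (Algebra.IsAlgebraic.algHom_bijective g))
    exact ⟨i, AlgHom.ext fun y ↦ (hi y y.2).symm⟩
  rw [Algebra.norm_eq_prod_embeddings, ← finprod_eq_prod_of_fintype]
  exact (finprod_eq_of_bijective e ⟨e_injective, e_surjective⟩ fun _ ↦ rfl).symm

namespace Hplus

theorem mono {m n : ℕ} (h : m ∣ n) : Hplus m ≤ Hplus n := by
  refine IntermediateField.adjoin.mono _ _ _ ?_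
  rintro _ ⟨ζ, hζ, rfl⟩
  obtain ⟨t, rfl⟩ := h
  exact ⟨ζ, by rw [pow_mul, hζ, one_pow], rfl⟩

theorem add_inv_mem {n : ℕ} {x : Qbar} (hx : x ^ n = 1) : x + x⁻¹ ∈ Hplus n :=
  IntermediateField.subset_adjoin _ _ ⟨x, hx, rfl⟩

theorem finiteDimensional {n : ℕ} (hn : 0 < n) : FiniteDimensional ℚ (Hplus n) := by
  have finite_roots : {ζ : Qbar | ζ ^ n = 1}.Finite :=
    (Polynomial.nthRootsFinset n (1 : Qbar)).finite_toSet.subset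
      fun _ hζ ↦ (Polynomial.mem_nthRootsFinset hn _).mpr hζ
  have : Finite {x : Qbar | ∃ ζ : Qbar, ζ ^ n = 1 ∧ x = ζ + ζ⁻¹} :=
    (finite_roots.image fun ζ ↦ ζ + ζ⁻¹).subset fun _ ⟨ζ, hζ, hx⟩ ↦ ⟨ζ, hζ, hx.symm⟩
  exact IntermediateField.finiteDimensional_adjoin
    fun x _ ↦ (Algebra.IsAlgebraic.isAlgebraic x).isIntegral

section Embeddings

variable {L : Type*} [Field L] [Algebra ℚ L] {n : ℕ} {f g : Qbar →ₐ[ℚ] L}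

theorem apply_eq_or_eq_inv (hn : 0 < n) (hfg : ∀ x ∈ Hplus n, f x = g x) {x : Qbar}
    (hx : x ^ n = 1) : f x = g x ∨ f x = (g x)⁻¹ := by
  have hx₀ : x ≠ 0 := (IsUnit.of_pow_eq_one hx hn.ne').ne_zero
  refine (add_inv_eq_add_inv_iff (by simpa using hx₀) (by simpa using hx₀)).mp ?_
  simpa only [map_add, map_inv₀] using hfg _ (add_inv_mem hx)

theorem apply_eq_of_apply_primitiveRoot (hn : 0 < n) {ω : Qbar} (hω : IsPrimitiveRoot ω n)
    (hfg : f ω = g ω ∨ f ω = (g ω)⁻¹) {x : Qbar} (hx : x ∈ Hplus n) : f x = g x := by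
  suffices f.comp (Hplus n).val = g.comp (Hplus n).val from DFunLike.congr_fun this ⟨x, hx⟩
  refine IntermediateField.algHom_ext_of_eq_adjoin ℚ rfl ?_
  rintro _ ⟨ζ, hζ, rfl⟩
  have : NeZero n := ⟨hn.ne'⟩
  obtain ⟨i, -, rfl⟩ := hω.eq_pow_of_pow_eq_one hζ
  change f (ω ^ i + (ω ^ i)⁻¹) = g (ω ^ i + (ω ^ i)⁻¹)
  rcases hfg with h | h
  · simp only [map_add, map_inv₀, map_pow, h]
  · simp only [map_add, map_inv₀, map_pow, h, inv_pow, inv_inv, add_comm]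

end Embeddings

section Automorphisms

variable {N d : ℕ} {ω : Qbar}

theorem exists_algEquiv_apply_eq_mul (hN : 0 < N) (hd : 0 < d) (hdN : d ∣ N)
    (hω : IsPrimitiveRoot ω (N * d)) {ξ : Qbar} (hξ : ξ ^ d = 1) :
    ∃ σ : Gal(Qbar/Hplus N), σ ω = ξ * ω := by
  have hNd : 0 < N * d := Nat.mul_pos hN hd
  obtain ⟨σ, hσ⟩ := exists_algEquiv_apply_eq_of_isPrimitiveRoot hNd hω
    (isPrimitiveRoot_mul_of_pow_eq_one hd hdN hω hξ)
  have σ_fixes : σ ∈ (Hplus N).fixingSubgroup := by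
    refine (IntermediateField.mem_fixingSubgroup_iff _ _).mpr fun y hy ↦ ?_
    refine apply_eq_of_apply_primitiveRoot (f := (σ : Qbar →ₐ[ℚ] Qbar)) (g := .id ℚ Qbar) hN
      (hω.pow hNd (mul_comm N d)) (Or.inl ?_) hy
    change σ (ω ^ d) = ω ^ d
    rw [map_pow, hσ, mul_pow, hξ, one_mul]
  exact ⟨IntermediateField.fixingSubgroupEquiv _ ⟨σ, σ_fixes⟩, hσ⟩

theorem existsUnique_apply_eq_mul_or_inv (hN : 3 ≤ N) (hd : 0 < d) (hω : IsPrimitiveRoot ω (N * d))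
    (σ : Gal(Qbar/Hplus N)) :
    ∃! ξ : {ξ : Qbar // ξ ^ d = 1}, σ ω = ξ * ω ∨ σ ω = (ξ * ω)⁻¹ := by
  have hN₀ : 0 < N := by lia
  have hω₀ : ω ≠ 0 := hω.ne_zero (Nat.mul_pos hN₀ hd).ne'
  have hωd : IsPrimitiveRoot (ω ^ d) N := hω.pow (Nat.mul_pos hN₀ hd) (mul_comm N d)
  have exists_root : ∃ ξ : {ξ : Qbar // ξ ^ d = 1}, σ ω = ξ * ω ∨ σ ω = (ξ * ω)⁻¹ := by
    have σ_pow : (σ ω) ^ d = ω ^ d ∨ (σ ω) ^ d = (ω ^ d)⁻¹ := by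
      simpa using apply_eq_or_eq_inv (f := (σ : Qbar →ₐ[Hplus N] Qbar).restrictScalars ℚ)
        (g := .id ℚ Qbar) hN₀ (fun y hy ↦ σ.commutes ⟨y, hy⟩) hωd.pow_eq_one
    rcases σ_pow with h | h
    · exact ⟨⟨σ ω / ω, by rw [div_pow, h, div_self (pow_ne_zero _ hω₀)]⟩,
        Or.inl (div_mul_cancel₀ _ hω₀).symm⟩
    · refine ⟨⟨(σ ω)⁻¹ / ω, ?_⟩, Or.inr ?_⟩
      · rw [div_pow, inv_pow, h, inv_inv, div_self (pow_ne_zero _ hω₀)]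
      · rw [div_mul_cancel₀ _ hω₀, inv_inv]
  have ne_inv (ξ ξ' : {ξ : Qbar // ξ ^ d = 1}) : ξ * ω ≠ (ξ' * ω)⁻¹ := by
    have hξ'₀ : (ξ' : Qbar) ≠ 0 := (IsUnit.of_pow_eq_one ξ'.2 hd.ne').ne_zero
    rw [ne_eq, ← mul_eq_one_iff_eq_inv₀ (mul_ne_zero hξ'₀ hω₀)]
    exact mul_mul_mul_ne_one_of_isPrimitiveRoot hN hd hω ξ.2 ξ'.2
  obtain ⟨ξ, hξ⟩ := exists_root
  refine ⟨ξ, hξ, fun ξ' hξ' ↦ Subtype.ext (mul_right_cancel₀ hω₀ ?_)⟩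
  rcases hξ with hξ | hξ <;> rcases hξ' with hξ' | hξ'
  · exact hξ'.symm.trans hξ
  · exact (ne_inv _ _ (hξ.symm.trans hξ')).elim
  · exact (ne_inv _ _ (hξ'.symm.trans hξ)).elim
  · exact inv_injective (hξ'.symm.trans hξ)

theorem norm_eq_finprod (hN : 3 ≤ N) (hd : 0 < d) (hω : IsPrimitiveRoot ω (N * d))
    (hle : Hplus N ≤ Hplus (N * d)) {τ : {ξ : Qbar // ξ ^ d = 1} → Gal(Qbar/Hplus N)}
    (hτ : ∀ ξ, τ ξ ω = ξ * ω) (x : IntermediateField.extendScalars hle) :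
    (Algebra.norm (Hplus N) x : Qbar) = ∏ᶠ ξ, τ ξ x := by
  have hNd : 0 < N * d := Nat.mul_pos (by lia) hd
  have : FiniteDimensional ℚ (IntermediateField.extendScalars hle) := finiteDimensional hNd
  have : FiniteDimensional (Hplus N) (IntermediateField.extendScalars hle) := .right ℚ _ _
  refine norm_eq_finprod_of_existsUnique _ τ (fun σ ↦ ?_) x
  have agree_iff (ξ : {ξ : Qbar // ξ ^ d = 1}) :
      (σ ω = ξ * ω ∨ σ ω = (ξ * ω)⁻¹) ↔
        ∀ y ∈ IntermediateField.extendScalars hle, σ y = τ ξ y := by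
    let f : Qbar →ₐ[ℚ] Qbar := (σ : Qbar →ₐ[Hplus N] Qbar).restrictScalars ℚ
    let g : Qbar →ₐ[ℚ] Qbar := (τ ξ : Qbar →ₐ[Hplus N] Qbar).restrictScalars ℚ
    rw [← hτ]
    exact ⟨fun h y hy ↦ apply_eq_of_apply_primitiveRoot (f := f) (g := g) hNd hω h hy,
      fun h ↦ apply_eq_or_eq_inv (f := f) (g := g) hNd h hω.pow_eq_one⟩
  simpa only [agree_iff] using existsUnique_apply_eq_mul_or_inv hN hd hω σ

end Automorphisms

end Hplus

/-- Axiom (E1) of an Euler system, on an arbitrary set `W` of algebraic numbers: `φ` commutes with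
the Galois action and is invariant under inversion. -/
structure IsEvenEquivariantOn (W : Set Qbar) (φ : Qbar → Qbar) : Prop where
  map_galois : ∀ σ : Gal(Qbar/ℚ), ∀ x ∈ W, φ (σ x) = σ (φ x)
  map_inv : ∀ x ∈ W, φ x⁻¹ = φ x

namespace IsEvenEquivariantOn

variable {W : Set Qbar} {φ : Qbar → Qbar}

theorem mem_Hplus (hφ : IsEvenEquivariantOn W φ) {n : ℕ} (hn : 0 < n) {x : Qbar} (hxW : x ∈ W)
    (hx : x ^ n = 1) : φ x ∈ Hplus n := by
  have : IsGalois ℚ Qbar := ⟨⟩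
  rw [← InfiniteGalois.fixedField_fixingSubgroup (Hplus n),
    IntermediateField.mem_fixedField_iff]
  intro σ hσ
  have σ_fixes := (IntermediateField.mem_fixingSubgroup_iff _ _).mp hσ
  have σ_apply : σ x = x ∨ σ x = x⁻¹ :=
    Hplus.apply_eq_or_eq_inv (f := (σ : Qbar →ₐ[ℚ] Qbar)) (g := .id ℚ Qbar) hn σ_fixes hx
  rw [← hφ.map_galois σ x hxW]
  rcases σ_apply with h | h
  · rw [h]
  · rw [h, hφ.map_inv x hxW]

theorem norm_apply_mul_eq_finprod (hφ : IsEvenEquivariantOn W φ) {N d : ℕ} (hN : 3 ≤ N)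
    (hdN : d ∣ N) {M : ℕ} (hM : M = N * d) {ω z : Qbar} (hω : IsPrimitiveRoot ω M)
    (hz : z ^ N = 1) (hW : ω * z ∈ W) (hle : Hplus N ≤ Hplus M)
    {x : IntermediateField.extendScalars hle} (hx : (x : Qbar) = φ (ω * z)) :
    (Algebra.norm (Hplus N) x : Qbar) = ∏ᶠ (ξ : Qbar) (_ : ξ ^ d = 1), φ (ξ * (ω * z)) := by
  subst hM
  have hN₀ : 0 < N := by lia
  have hd : 0 < d := Nat.pos_of_dvd_of_pos hdN hN₀
  choose τ hτ using fun ξ : {ξ : Qbar // ξ ^ d = 1} ↦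
    Hplus.exists_algEquiv_apply_eq_mul hN₀ hd hdN hω ξ.2
  have τ_root (ξ : {ξ : Qbar // ξ ^ d = 1}) : τ ξ z = z := by
    have : NeZero N := ⟨hN₀.ne'⟩
    obtain ⟨i, -, rfl⟩ :=
      (hω.pow (Nat.mul_pos hN₀ hd) (mul_comm N d)).eq_pow_of_pow_eq_one hz
    rw [map_pow, map_pow, hτ, mul_pow, ξ.2, one_mul]
  rw [Hplus.norm_eq_finprod hN hd hω hle hτ, ← finprod_subtype_eq_finprod_cond]
  refine finprod_congr fun ξ ↦ ?_
  calc τ ξ x = φ (τ ξ (ω * z)) := by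
        rw [hx]
        exact (hφ.map_galois ((τ ξ).restrictScalars ℚ) _ hW).symm
    _ = φ (ξ * (ω * z)) := by rw [map_mul, hτ, τ_root, mul_assoc]

end IsEvenEquivariantOn

theorem IsEulerSystem.isEvenEquivariantOn {S : Finset ℕ} {φ : Qbar → Qbar}
    (hφ : IsEulerSystem S φ) : IsEvenEquivariantOn (WS S) φ :=
  ⟨hφ.galois_equivariant, hφ.map_inv⟩

theorem IsEulerSystem.three_le {S : Finset ℕ} {φ : Qbar → Qbar} (hφ : IsEulerSystem S φ) {p : ℕ}
    (hp : p.Prime) (hpS : p ∉ S) : 3 ≤ p :=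
  hp.two_le.lt_of_ne fun h ↦ hpS (h ▸ hφ.two_mem)

theorem IsEulerSystem.mem_WS {S : Finset ℕ} {φ : Qbar → Qbar} (hφ : IsEulerSystem S φ) {m : ℕ}
    (hm : 1 ≤ m) (hmS : ∀ q ∈ S, m.Coprime q) {p : ℕ} (hp : p.Prime) (hpS : p ∉ S) {k : ℕ}
    {x : Qbar} (hx : x ^ (m * p ^ k) = 1) : x ∈ WS S := by
  refine ⟨m * p ^ k, Nat.mul_pos hm (pow_pos hp.pos k), fun q hq ↦ ?_, hx⟩
  have hpq : p.Coprime q :=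
    (Nat.coprime_primes hp (hφ.prime_mem q hq)).mpr fun h ↦ hpS (h ▸ hq)
  exact (hmS q hq).mul_left (hpq.pow_left k)

theorem euler_system_norm_compatible_tower_general
    {W : Set Qbar} {φ : Qbar → Qbar} (hφ : IsEvenEquivariantOn W φ)
    {m d : ℕ} (hmd : 3 ≤ m * d) (hcop : m.Coprime d)
    (hW : ∀ (k : ℕ) (x : Qbar), x ^ (m * d ^ k) = 1 → x ∈ W)
    (hdist : ∀ x ∈ W, ∏ᶠ (ξ : Qbar) (_ : ξ ^ d = 1), φ (ξ * x) = φ (x ^ d))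
    {η : Qbar} (hη : η ^ m = 1)
    {ζ : ℕ → Qbar} (hζ : ∀ k, IsPrimitiveRoot (ζ k) (d ^ (k + 1)))
    (hζcomp : ∀ k, ζ (k + 1) ^ d = ζ k)
    {c : ℕ → ℤ} (hc : ∀ k, (m : ℤ) ∣ c k * (d : ℤ) ^ k - 1) (k : ℕ) :
    ∃ (h1 : φ (ζ (k + 1) * η ^ c (k + 1)) ∈ Hplus (m * d ^ (k + 2)))
      (hle : Hplus (m * d ^ (k + 1)) ≤ Hplus (m * d ^ (k + 2))),
      (Algebra.norm (Hplus (m * d ^ (k + 1)))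
          (⟨φ (ζ (k + 1) * η ^ c (k + 1)), h1⟩ : IntermediateField.extendScalars hle) : Qbar)
        = φ (ζ k * η ^ c k) := by
  have hm : m ≠ 0 := by rintro rfl; lia
  have hd : d ≠ 0 := by rintro rfl; lia
  have : NeZero m := ⟨hm⟩
  have hN : 3 ≤ m * d ^ (k + 1) := hmd.trans (by gcongr; exact Nat.le_self_pow k.succ_ne_zero d)
  have hηc : (η ^ c (k + 1)) ^ m = 1 := by
    rw [← zpow_natCast, zpow_comm, zpow_natCast, hη, one_zpow]
  have hη_pow : (η ^ c (k + 1)) ^ d = η ^ c k := by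
    rw [← zpow_natCast, ← zpow_mul]
    refine zpow_eq_zpow_of_dvd_sub hm hη (dvd_mul_sub_of_dvd_mul_sub_one ?_ (hc k))
    simpa only [pow_succ] using hc (k + 1)
  obtain ⟨ω, z, hω, hz, hωz⟩ :=
    exists_eq_isPrimitiveRoot_mul (hcop.pow_right (k + 2)) (hζ (k + 1)) hηc
  have hx : (ω * z) ^ (m * d ^ (k + 2)) = 1 := by
    rw [mul_pow, hω.pow_eq_one, pow_mul, hz, one_pow, one_mul]
  have hωzW : ω * z ∈ W := hW (k + 2) _ hx
  have hM : m * d ^ (k + 2) = m * d ^ (k + 1) * d := by ring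
  have hle : Hplus (m * d ^ (k + 1)) ≤ Hplus (m * d ^ (k + 2)) := Hplus.mono ⟨d, hM⟩
  have hmem : φ (ω * z) ∈ Hplus (m * d ^ (k + 2)) := hφ.mem_Hplus (by positivity) hωzW hx
  refine ⟨hωz ▸ hmem, hle, ?_⟩
  calc _ = ∏ᶠ (ξ : Qbar) (_ : ξ ^ d = 1), φ (ξ * (ω * z)) :=
        hφ.norm_apply_mul_eq_finprod hN ((dvd_pow_self d k.succ_ne_zero).mul_left m) hM hω
          (by rw [pow_mul, hz, one_pow]) hωzW hle (congrArg φ hωz)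
    _ = φ ((ω * z) ^ d) := hdist _ hωzW
    _ = φ (ζ k * η ^ c k) := by rw [← hωz, mul_pow, hζcomp, hη_pow]

open IntermediateField in
/-- Proposition 2.2. Let `φ` be an Euler system for `S`, `η ∈ μ_m`
(`m` coprime to `S`), `p ∤ m` a prime not in `S`, `ζ_k` a compatible system of primitive
`p^{k+1}`-th roots of unity, and `c_k` integers with `c_k p^k ≡ 1 (mod m)` (so that
`η ↦ η^{c_k}` realizes `Frob_p^{-k}` on `μ_m`).  Then for every `k ≥ 0`,
`N_{H_{mp^{k+2}}/H_{mp^{k+1}}}(φ(ζ_{k+1} η^{c_{k+1}})) = φ(ζ_k η^{c_k})`; i.e. the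
sequence `φ(ζ_k η^{Frob_p^{-k}})` is norm compatible in the tower `(H_{mp^{k+1}})_k`. -/
theorem euler_system_norm_compatible_tower
    (S : Finset ℕ) (φ : Qbar → Qbar) (hφ : IsEulerSystem S φ)
    (m : ℕ) (hm : 1 ≤ m) (hmS : ∀ q ∈ S, Nat.Coprime m q)
    (η : Qbar) (hη : η ^ m = 1)
    (p : ℕ) (hp : p.Prime) (hpm : ¬ p ∣ m) (hpS : p ∉ S)
    (ζ : ℕ → Qbar) (hζ : ∀ k, IsPrimitiveRoot (ζ k) (p ^ (k + 1)))
    (hζcomp : ∀ k, ζ (k + 1) ^ p = ζ k)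
    (c : ℕ → ℤ) (hc : ∀ k, (m : ℤ) ∣ c k * (p : ℤ) ^ k - 1) :
    ∀ k : ℕ, ∃ (h1 : φ (ζ (k + 1) * η ^ c (k + 1)) ∈ Hplus (m * p ^ (k + 2)))
      (hle : Hplus (m * p ^ (k + 1)) ≤ Hplus (m * p ^ (k + 2))),
      ((Algebra.norm ↥(Hplus (m * p ^ (k + 1)))
          (⟨φ (ζ (k + 1) * η ^ c (k + 1)),
            (IntermediateField.mem_extendScalars hle).mpr h1⟩ :
            ↥(IntermediateField.extendScalars hle)) : ↥(Hplus (m * p ^ (k + 1)))) : Qbar)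
        = φ (ζ k * η ^ c k) :=
  euler_system_norm_compatible_tower_general hφ.isEvenEquivariantOn
    ((hφ.three_le hp hpS).trans (Nat.le_mul_of_pos_left p hm))
    (hp.coprime_iff_not_dvd.mpr hpm).symm (fun _ _ ↦ hφ.mem_WS hm hmS hp hpS)
    (hφ.norm_relation p hp hpS) hη hζ hζcomp hc
end
end

section
/- Fix an odd prime p, an integer n ≥ 0, and a primitive p^{n+1}-th root of unity ζ_n. For every integer a coprime to 2p there exists a finite set S of primes with p ∉ S and an Euler system φ for S such that φ(ζ_n) = (ζ_n^{−a} − ζ_n^{a})/(ζ_n^{−1} − ζ_n). Consequently, every such cyclotomic unit of ℚ(ζ_n)⁺ is the value at ζ_n of an Euler system. -/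
open scoped BigOperators

noncomputable section

/-!
With `S_n` the rescaled Chebyshev polynomials of the second kind, the Euler system is
`φ(x) = S_{a-1}(x + x⁻¹) = (x ^ a - x ^ (-a)) / (x - x⁻¹)`. An integral polynomial in `x + x⁻¹`
commutes with Galois, is invariant under `x ↦ x⁻¹`, and respects the congruence `ζ ≡ 1` modulo
primes above `p` for `ζ ∈ μ_p`. For the norm relation, `x - x⁻¹` itself satisfies
`∏_{z ∈ μ_p} (z x - (z x)⁻¹) = x ^ p - x ^ (-p)` for odd `p`, and `z ↦ z ^ a` permutes `μ_p`
when `p ∤ a`. If `x ^ p = 1`, both sides vanish; omitting the factor `z = 1` from the products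
shows that the values of `φ` at the nontrivial `z ∈ μ_p` multiply to `1`, which leaves `φ(1) = a`.
-/

open Polynomial

section SineQuotient

variable {K : Type*} [Field K]

/-- The function `x ↦ (x ^ a - x ^ (-a)) / (x - x⁻¹)`, whose values at roots of unity are
cyclotomic units. Writing it as a Chebyshev polynomial in `x + x⁻¹` gives the value `a` at `x = 1`,
where the quotient would be `0 / 0`. -/
def sineQuotient (a : ℤ) (x : K) : K :=
  aeval (x + x⁻¹) (Chebyshev.S ℤ (a - 1))

theorem chebyshev_S_eval_add_inv_mul_sub_inv {x : K} (hx : x ≠ 0) (n : ℤ) :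
    (Chebyshev.S K n).eval (x + x⁻¹) * (x - x⁻¹) = x ^ (n + 1) - x ^ (-(n + 1)) := by
  induction n using Chebyshev.induct with
  | zero => simp
  | one =>
    simp only [Chebyshev.S_one, eval_X, one_add_one_eq_two, zpow_neg, zpow_ofNat]
    field_simp
    ring
  | add_two n ih₁ ih₀ =>
    rw [Chebyshev.S_add_two, eval_sub, eval_mul, eval_X, sub_mul, mul_assoc, ih₁, ih₀]
    simp only [neg_add, zpow_add₀ hx, zpow_neg, zpow_ofNat]
    field_simp
    ring
  | neg_add_one n ih₀ ih₁ =>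
    rw [Chebyshev.S_sub_one, eval_sub, eval_mul, eval_X, sub_mul, mul_assoc, ih₀, ih₁]
    simp only [neg_add, sub_eq_add_neg, zpow_add₀ hx, zpow_neg, zpow_one, neg_neg]
    field_simp
    ring

theorem sineQuotient_mul_sub_inv (a : ℤ) {x : K} (hx : x ≠ 0) :
    sineQuotient a x * (x - x⁻¹) = x ^ a - (x ^ a)⁻¹ := by
  rw [sineQuotient, Chebyshev.aeval_S, chebyshev_S_eval_add_inv_mul_sub_inv hx, sub_add_cancel,
    zpow_neg]

theorem sineQuotient_one_right (a : ℤ) : sineQuotient a (1 : K) = a := by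
  simp [sineQuotient, Chebyshev.aeval_S, one_add_one_eq_two]

theorem sineQuotient_inv_right (a : ℤ) (x : K) : sineQuotient a x⁻¹ = sineQuotient a x := by
  simp only [sineQuotient, inv_inv, add_comm]

theorem map_sineQuotient {L : Type*} [Field L] (σ : K →+* L) (a : ℤ) (x : K) :
    σ (sineQuotient a x) = sineQuotient a (σ x) := by
  simpa only [sineQuotient, map_add, map_inv₀, RingHom.toIntAlgHom_apply] using
    (aeval_algHom_apply σ.toIntAlgHom (x + x⁻¹) (Chebyshev.S ℤ (a - 1))).symm

theorem sub_inv_ne_zero_of_sq_ne_one {x : K} (hx : x ≠ 0) (hx2 : x ^ 2 ≠ 1) : x - x⁻¹ ≠ 0 :=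
  fun h ↦ hx2 <| by rw [sq, mul_eq_one_iff_eq_inv₀ hx]; exact sub_eq_zero.mp h

theorem sineQuotient_eq_div (a : ℤ) {x : K} (hx : x ≠ 0) (hx2 : x ^ 2 ≠ 1) :
    sineQuotient a x = (x ^ (-a) - x ^ a) / (x ^ (-1 : ℤ) - x ^ (1 : ℤ)) := by
  rw [zpow_neg, zpow_neg, zpow_one, ← neg_div_neg_eq, neg_sub, neg_sub,
    eq_div_iff (sub_inv_ne_zero_of_sq_ne_one hx hx2), sineQuotient_mul_sub_inv a hx]

end SineQuotient

section RootsOfUnityProducts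

variable {K : Type*} [Field K] {q : ℕ}

theorem zpow_zpow_eq_self_of_pow_eq_one {z : K} (hz : z ^ q = 1) {a u v : ℤ}
    (huv : u * a + v * q = 1) (hz0 : z ≠ 0) : (z ^ a) ^ u = z := by
  rw [← zpow_mul, show a * u = 1 - q * v by linarith, zpow_sub₀ hz0, zpow_mul, zpow_natCast, hz,
    one_zpow, zpow_one, div_one]

theorem prod_nthRootsFinset_erase_one_zpow [DecidableEq K] {M : Type*} [CommMonoid M] (hq : 0 < q)
    {a : ℤ} (ha : IsCoprime a q) (f : K → M) :
    ∏ z ∈ (nthRootsFinset q (1 : K)).erase 1, f (z ^ a) =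
      ∏ z ∈ (nthRootsFinset q (1 : K)).erase 1, f z := by
  obtain ⟨u, v, huv⟩ := ha
  have zpow_mem {b c d : ℤ} (h : c * b + d * q = 1) (z : K)
      (hz : z ∈ (nthRootsFinset q (1 : K)).erase 1) :
      z ^ b ∈ (nthRootsFinset q (1 : K)).erase 1 ∧ (z ^ b) ^ c = z := by
    have hz0 : z ≠ 0 := ne_zero_of_mem_nthRootsFinset one_ne_zero (Finset.mem_of_mem_erase hz)
    simp only [Finset.mem_erase, mem_nthRootsFinset hq] at hz ⊢
    have hinv := zpow_zpow_eq_self_of_pow_eq_one hz.2 h hz0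
    refine ⟨⟨fun h1 ↦ hz.1 ?_, ?_⟩, hinv⟩
    · rw [← hinv, h1, one_zpow]
    · rw [← zpow_natCast, zpow_comm, zpow_natCast, hz.2, one_zpow]
  have hvu : a * u + v * q = 1 := by rw [mul_comm a, huv]
  exact Finset.prod_nbij' (· ^ a) (· ^ u) (fun z hz ↦ (zpow_mem huv z hz).1)
    (fun z hz ↦ (zpow_mem hvu z hz).1) (fun z hz ↦ (zpow_mem huv z hz).2)
    (fun z hz ↦ (zpow_mem hvu z hz).2) fun _ _ ↦ rfl

theorem prod_nthRootsFinset_zpow {M : Type*} [CommMonoid M] (hq : 0 < q) {a : ℤ}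
    (ha : IsCoprime a q) (f : K → M) :
    ∏ z ∈ nthRootsFinset q (1 : K), f (z ^ a) = ∏ z ∈ nthRootsFinset q (1 : K), f z := by
  classical
  have h1 : (1 : K) ∈ nthRootsFinset q (1 : K) := one_mem_nthRootsFinset hq
  rw [← Finset.mul_prod_erase _ _ h1, ← Finset.mul_prod_erase _ f h1, one_zpow,
    prod_nthRootsFinset_erase_one_zpow hq ha]

theorem prod_nthRootsFinset_mul_right {M : Type*} [CommMonoid M] (hq : 0 < q) {x : K}
    (hx : x ^ q = 1) (f : K → M) :
    ∏ z ∈ nthRootsFinset q (1 : K), f (z * x) = ∏ z ∈ nthRootsFinset q (1 : K), f z := by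
  have hx0 : x ≠ 0 := ne_zero_pow hq.ne' (hx ▸ one_ne_zero)
  apply Finset.prod_nbij' (· * x) (· * x⁻¹) <;>
    simp +contextual [mem_nthRootsFinset hq, mul_pow, hx, hx0]

theorem prod_nthRootsFinset_of_odd (hq : Odd q) : ∏ z ∈ nthRootsFinset q (1 : K), z = 1 := by
  have hsq : (∏ z ∈ nthRootsFinset q (1 : K), z) ^ 2 = ∏ z ∈ nthRootsFinset q (1 : K), z := by
    rw [← Finset.prod_pow]
    simpa only [zpow_natCast] using prod_nthRootsFinset_zpow hq.pos
      (Nat.isCoprime_iff_coprime.mpr (Nat.coprime_two_left.mpr hq)) fun z : K ↦ z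
  have hne : ∏ z ∈ nthRootsFinset q (1 : K), z ≠ 0 :=
    Finset.prod_ne_zero_iff.mpr fun z ↦ ne_zero_of_mem_nthRootsFinset one_ne_zero
  rwa [sq, mul_eq_left₀ hne] at hsq

theorem prod_nthRootsFinset_mul_sub_inv {w : K} (hw : IsPrimitiveRoot w q) (hq : Odd q) (x : K) :
    ∏ z ∈ nthRootsFinset q (1 : K), (z * x - (z * x)⁻¹) = x ^ q - (x ^ q)⁻¹ := by
  have hcop : IsCoprime (-2 : ℤ) q :=
    (Nat.isCoprime_iff_coprime.mpr (Nat.coprime_two_left.mpr hq)).neg_left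
  calc ∏ z ∈ nthRootsFinset q (1 : K), (z * x - (z * x)⁻¹)
      = ∏ z ∈ nthRootsFinset q (1 : K), z * (x - z ^ (-2 : ℤ) * x⁻¹) := by
        refine Finset.prod_congr rfl fun z hz ↦ ?_
        have hz0 : z ≠ 0 := ne_zero_of_mem_nthRootsFinset one_ne_zero hz
        rw [zpow_neg, zpow_ofNat, mul_inv]
        field_simp
    _ = ∏ z ∈ nthRootsFinset q (1 : K), (x - z * x⁻¹) := by
        rw [Finset.prod_mul_distrib, prod_nthRootsFinset_of_odd hq, one_mul,
          prod_nthRootsFinset_zpow hq.pos hcop fun z ↦ x - z * x⁻¹]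
    _ = x ^ q - (x ^ q)⁻¹ := by
        rw [← hw.pow_sub_pow_eq_prod_sub_mul _ _ hq.pos, inv_pow]

theorem prod_sineQuotient_mul_of_sq_ne_one {w : K} (hw : IsPrimitiveRoot w q) (hq : Odd q) {a : ℤ}
    (ha : IsCoprime a q) {x : K} (hx : x ≠ 0) (hxq : (x ^ q) ^ 2 ≠ 1) :
    ∏ z ∈ nthRootsFinset q (1 : K), sineQuotient a (z * x) = sineQuotient a (x ^ q) := by
  apply mul_right_cancel₀ (sub_inv_ne_zero_of_sq_ne_one (pow_ne_zero q hx) hxq)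
  calc (∏ z ∈ nthRootsFinset q (1 : K), sineQuotient a (z * x)) * (x ^ q - (x ^ q)⁻¹)
      = ∏ z ∈ nthRootsFinset q (1 : K), (z ^ a * x ^ a - (z ^ a * x ^ a)⁻¹) := by
        rw [← prod_nthRootsFinset_mul_sub_inv hw hq, ← Finset.prod_mul_distrib]
        refine Finset.prod_congr rfl fun z hz ↦ ?_
        have hz0 : z ≠ 0 := ne_zero_of_mem_nthRootsFinset one_ne_zero hz
        rw [sineQuotient_mul_sub_inv a (mul_ne_zero hz0 hx), mul_zpow]
    _ = (x ^ a) ^ q - ((x ^ a) ^ q)⁻¹ := by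
        rw [prod_nthRootsFinset_zpow hq.pos ha fun z ↦ z * x ^ a - (z * x ^ a)⁻¹,
          prod_nthRootsFinset_mul_sub_inv hw hq]
    _ = sineQuotient a (x ^ q) * (x ^ q - (x ^ q)⁻¹) := by
        rw [sineQuotient_mul_sub_inv a (pow_ne_zero q hx), ← zpow_natCast, zpow_comm, zpow_natCast]

theorem sq_ne_one_of_pow_eq_one_of_odd {z : K} (hz : z ^ q = 1) (hq : Odd q) (hz1 : z ≠ 1) :
    z ^ 2 ≠ 1 := fun hz2 ↦ hz1 <| by
  simpa [Nat.coprime_two_left.mpr hq] using pow_gcd_eq_one.mpr ⟨hz2, hz⟩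

theorem prod_sineQuotient_nthRootsFinset (hq : Odd q) {a : ℤ} (ha : IsCoprime a q) :
    ∏ z ∈ nthRootsFinset q (1 : K), sineQuotient a z = a := by
  classical
  set μ' := (nthRootsFinset q (1 : K)).erase 1
  have hz0 : ∀ z ∈ μ', z ≠ 0 := fun z hz ↦
    ne_zero_of_mem_nthRootsFinset one_ne_zero (Finset.mem_of_mem_erase hz)
  have hne : ∏ z ∈ μ', (z - z⁻¹) ≠ 0 := Finset.prod_ne_zero_iff.mpr fun z hz ↦
    sub_inv_ne_zero_of_sq_ne_one (hz0 z hz) <| sq_ne_one_of_pow_eq_one_of_odd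
      ((mem_nthRootsFinset hq.pos 1).mp (Finset.mem_of_mem_erase hz)) hq (Finset.ne_of_mem_erase hz)
  have hprod : ∏ z ∈ μ', sineQuotient a z = 1 := by
    apply mul_right_cancel₀ hne
    rw [one_mul, ← Finset.prod_mul_distrib,
      ← prod_nthRootsFinset_erase_one_zpow hq.pos ha fun z ↦ z - z⁻¹]
    exact Finset.prod_congr rfl fun z hz ↦ sineQuotient_mul_sub_inv a (hz0 z hz)
  rw [← Finset.mul_prod_erase _ _ (one_mem_nthRootsFinset hq.pos), hprod, mul_one,
    sineQuotient_one_right]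

theorem prod_sineQuotient_mul_of_pow_eq_one (hq : Odd q) {a : ℤ} (ha : IsCoprime a q) {x : K}
    (hx : x ^ q = 1) :
    ∏ z ∈ nthRootsFinset q (1 : K), sineQuotient a (z * x) = sineQuotient a (x ^ q) := by
  rw [prod_nthRootsFinset_mul_right hq.pos hx, prod_sineQuotient_nthRootsFinset hq ha, hx,
    sineQuotient_one_right]

end RootsOfUnityProducts

section Congruence

theorem sub_one_mem_of_pow_prime_eq_one {A : Type*} [CommRing A] {P : Ideal A} [P.IsPrime] {p : ℕ}
    (hp : p.Prime) (hpP : (p : A) ∈ P) {z : A} (hz : z ^ p = 1) : z - 1 ∈ P := by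
  have : Fact p.Prime := ⟨hp⟩
  have : CharP (A ⧸ P) p := (CharP.charP_iff_prime_eq_zero hp).mpr <| by
    rw [← map_natCast (Ideal.Quotient.mk P), Ideal.Quotient.eq_zero_iff_mem.mpr hpP]
  have hpow : Ideal.Quotient.mk P z ^ p ^ 1 = 1 := by rw [pow_one, ← map_pow, hz, map_one]
  rw [← Ideal.Quotient.eq, map_one]
  simpa using (ExpChar.pow_prime_pow_mul_eq_one_iff p 1 1 (Ideal.Quotient.mk P z)).mp
    (by simpa using hpow)

variable {P : Ideal (integralClosure ℤ Qbar)}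

theorem congMod_coe (hP : P ≠ ⊤) {x y : integralClosure ℤ Qbar} (h : x - y ∈ P) :
    congMod P x y :=
  ⟨1, P.ne_top_iff_one.mp hP, x - y, h, by simp⟩

theorem congMod_aeval (hP : P ≠ ⊤) (f : ℤ[X]) {x y : integralClosure ℤ Qbar} (h : x - y ∈ P) :
    congMod P (aeval (x : Qbar) f) (aeval (y : Qbar) f) := by
  have hdvd : x - y ∣ aeval x f - aeval y f := by
    simpa only [eval_map_algebraMap] using
      sub_dvd_eval_sub x y (f.map (algebraMap ℤ (integralClosure ℤ Qbar)))
  simpa using congMod_coe hP (P.mem_of_dvd hdvd h)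

theorem congMod_sineQuotient_mul [P.IsPrime] {p : ℕ} (hp : p.Prime)
    (hpP : (p : integralClosure ℤ Qbar) ∈ P) (a : ℤ) {z x : Qbar} (hz : z ^ p = 1)
    (hx : IsIntegral ℤ x) (hx' : IsIntegral ℤ x⁻¹) :
    congMod P (sineQuotient a (z * x)) (sineQuotient a x) := by
  have hz' : z⁻¹ ^ p = 1 := by rw [inv_pow, hz, inv_one]
  let X : integralClosure ℤ Qbar := ⟨x, hx⟩
  let X' : integralClosure ℤ Qbar := ⟨x⁻¹, hx'⟩
  let Z : integralClosure ℤ Qbar := ⟨z, .of_pow hp.pos (hz ▸ isIntegral_one)⟩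
  let Z' : integralClosure ℤ Qbar := ⟨z⁻¹, .of_pow hp.pos (hz' ▸ isIntegral_one)⟩
  have hZ : Z - 1 ∈ P := sub_one_mem_of_pow_prime_eq_one hp hpP (Subtype.ext hz)
  have hZ' : Z' - 1 ∈ P := sub_one_mem_of_pow_prime_eq_one hp hpP (Subtype.ext hz')
  have hmem : Z * X + Z' * X' - (X + X') ∈ P := by
    convert P.add_mem (P.mul_mem_right X hZ) (P.mul_mem_right X' hZ') using 1
    ring
  rw [sineQuotient, sineQuotient, mul_inv]
  exact congMod_aeval Ideal.IsPrime.ne_top' (Chebyshev.S ℤ (a - 1)) hmem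

end Congruence

section WS

variable {S : Finset ℕ} {η : Qbar}

theorem ne_zero_of_mem_WS (hη : η ∈ WS S) : η ≠ 0 := by
  obtain ⟨n, hn, -, hηn⟩ := hη
  exact ne_zero_pow hn.ne' (hηn ▸ one_ne_zero)

theorem isIntegral_of_mem_WS (hη : η ∈ WS S) : IsIntegral ℤ η := by
  obtain ⟨n, hn, -, hηn⟩ := hη
  exact .of_pow hn (hηn ▸ isIntegral_one)

theorem inv_mem_WS (hη : η ∈ WS S) : η⁻¹ ∈ WS S := by
  obtain ⟨n, hn, hnS, hηn⟩ := hη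
  exact ⟨n, hn, hnS, by rw [inv_pow, hηn, inv_one]⟩

theorem pow_mem_WS (hη : η ∈ WS S) (k : ℕ) : η ^ k ∈ WS S := by
  obtain ⟨n, hn, hnS, hηn⟩ := hη
  exact ⟨n, hn, hnS, by rw [pow_right_comm, hηn, one_pow]⟩

theorem eq_one_of_mem_WS_of_zpow_eq_one {b : ℤ} (hb : b ≠ 0)
    (hbS : b.natAbs.primeFactors ⊆ S) (hη : η ∈ WS S) (h : η ^ b = 1) : η = 1 := by
  have hη0 := ne_zero_of_mem_WS hη
  obtain ⟨n, -, hnS, hηn⟩ := hη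
  have hcop : b.natAbs.Coprime (n : ℤ).natAbs := Nat.coprime_of_dvd fun q hq hqb hqn ↦
    have hqS : q ∈ S := hbS (hq.mem_primeFactors hqb (Int.natAbs_ne_zero.mpr hb))
    hq.ne_one ((hnS q hqS).symm.eq_one_of_dvd hqn)
  obtain ⟨u, v, huv⟩ := Int.isCoprime_iff_nat_coprime.mpr hcop
  rw [← zpow_zpow_eq_self_of_pow_eq_one hηn huv hη0, h, one_zpow]

end WS

theorem prod_sineQuotient_mul_of_mem_WS {S : Finset ℕ} (h2 : 2 ∈ S) {q : ℕ} (hq : Odd q) {a : ℤ}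
    (ha : IsCoprime a q) {η : Qbar} (hη : η ∈ WS S) :
    ∏ᶠ (z : Qbar) (_ : z ^ q = 1), sineQuotient a (z * η) = sineQuotient a (η ^ q) := by
  rw [finprod_cond_eq_prod_of_cond_iff _ fun _ ↦ (mem_nthRootsFinset hq.pos 1).symm]
  by_cases hηq : η ^ q = 1
  · exact prod_sineQuotient_mul_of_pow_eq_one hq ha hηq
  · have : NeZero q := ⟨hq.pos.ne'⟩
    obtain ⟨w, hw⟩ := HasEnoughRootsOfUnity.exists_primitiveRoot Qbar q
    refine prod_sineQuotient_mul_of_sq_ne_one hw hq ha (ne_zero_of_mem_WS hη) fun h ↦ hηq ?_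
    exact eq_one_of_mem_WS_of_zpow_eq_one two_ne_zero (by simpa [Nat.prime_two.primeFactors])
      (pow_mem_WS hη q) (by rwa [zpow_ofNat])

theorem sineQuotient_ne_zero_of_mem_WS {S : Finset ℕ} {a : ℤ} (ha : a ≠ 0)
    (haS : (2 * a).natAbs.primeFactors ⊆ S) {η : Qbar} (hη : η ∈ WS S) :
    sineQuotient a η ≠ 0 := by
  have hη0 := ne_zero_of_mem_WS hη
  by_cases hη1 : η = 1
  · simpa [hη1, sineQuotient_one_right] using ha
  · refine left_ne_zero_of_mul (b := η - η⁻¹) ?_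
    rw [sineQuotient_mul_sub_inv a hη0]
    refine sub_inv_ne_zero_of_sq_ne_one (zpow_ne_zero a hη0) fun h ↦ hη1 ?_
    refine eq_one_of_mem_WS_of_zpow_eq_one (mul_ne_zero two_ne_zero ha) haS hη ?_
    rwa [mul_comm, zpow_mul, zpow_ofNat]

theorem isCoprime_of_notMem_primeFactors {b : ℤ} (hb : b ≠ 0) {q : ℕ} (hq : q.Prime)
    (hqb : q ∉ b.natAbs.primeFactors) : IsCoprime b q := by
  rw [Int.isCoprime_iff_nat_coprime, Int.natAbs_natCast, Nat.coprime_comm, hq.coprime_iff_not_dvd]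
  exact fun h ↦ hqb (hq.mem_primeFactors h (Int.natAbs_ne_zero.mpr hb))

theorem isEulerSystem_sineQuotient {a : ℤ} (ha : a ≠ 0) :
    IsEulerSystem (2 * a).natAbs.primeFactors (sineQuotient a) := by
  have h2a : 2 * a ≠ 0 := mul_ne_zero two_ne_zero ha
  have two_mem : 2 ∈ (2 * a).natAbs.primeFactors :=
    Nat.prime_two.mem_primeFactors (by simp [Int.natAbs_mul]) (Int.natAbs_ne_zero.mpr h2a)
  exact
    { two_mem
      prime_mem := fun q ↦ Nat.prime_of_mem_primeFactors
      ne_zero := fun η hη ↦ sineQuotient_ne_zero_of_mem_WS ha subset_rfl hη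
      galois_equivariant := fun σ η _ ↦ (map_sineQuotient (σ : Qbar →+* Qbar) a η).symm
      map_inv := fun η _ ↦ sineQuotient_inv_right a η
      norm_relation := fun q hq hqS η hη ↦
        prod_sineQuotient_mul_of_mem_WS two_mem
          (hq.odd_of_ne_two (ne_of_mem_of_not_mem two_mem hqS).symm)
          (isCoprime_of_notMem_primeFactors h2a hq hqS).of_mul_left_right hη
      congruence := fun q hq _ η hη _ z hz P hP hqP ↦
        have := hP.isPrime
        congMod_sineQuotient_mul hq hqP a hz (isIntegral_of_mem_WS hη)
          (isIntegral_of_mem_WS (inv_mem_WS hη)) }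

theorem cyclotomic_unit_is_euler_system_value_general {a : ℤ} (ha : a ≠ 0) :
    ∃ φ : Qbar → Qbar, IsEulerSystem (2 * a).natAbs.primeFactors φ ∧
      ∀ ζ : Qbar, ζ ≠ 0 → ζ ^ 2 ≠ 1 →
        φ ζ = (ζ ^ (-a) - ζ ^ a) / (ζ ^ (-1 : ℤ) - ζ ^ (1 : ℤ)) :=
  ⟨sineQuotient a, isEulerSystem_sineQuotient ha, fun _ ↦ sineQuotient_eq_div a⟩

/-- Fix an odd prime `p` and a primitive `p^{n+1}`-th root of unity
`ζ_n`.  For every integer `a` coprime to `2p` there is a finite set `S` of primes with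
`p ∉ S` and an Euler system `φ` for `S` with
`φ(ζ_n) = (ζ_n^{-a} - ζ_n^a)/(ζ_n^{-1} - ζ_n)`: every such cyclotomic unit is the value
at `ζ_n` of an Euler system. -/
theorem cyclotomic_unit_is_euler_system_value
    (p : ℕ) (hp : p.Prime) (hodd : p ≠ 2) (n : ℕ)
    (ζ : Qbar) (hζ : IsPrimitiveRoot ζ (p ^ (n + 1)))
    (a : ℤ) (ha : IsCoprime a (2 * (p : ℤ))) :
    ∃ (S : Finset ℕ) (φ : Qbar → Qbar), p ∉ S ∧ IsEulerSystem S φ ∧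
      φ ζ = (ζ ^ (-a) - ζ ^ a) / (ζ ^ (-1 : ℤ) - ζ ^ (1 : ℤ)) := by
  have h2ap : IsCoprime (2 * a) (p : ℤ) := by
    refine .mul_left ?_ ha.of_mul_right_right
    exact Nat.isCoprime_iff_coprime.mpr ((Nat.coprime_primes Nat.prime_two hp).mpr hodd.symm)
  have ha0 : a ≠ 0 := by
    rintro rfl
    exact Int.prime_two.not_isUnit (isCoprime_zero_left.mp ha.of_mul_right_left)
  have hpS : p ∉ (2 * a).natAbs.primeFactors := fun h ↦
    (Nat.prime_iff_prime_int.mp hp).not_isUnit <|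
      h2ap.isUnit_of_dvd' (Int.natCast_dvd.mpr (Nat.dvd_of_mem_primeFactors h)) dvd_rfl
  obtain ⟨φ, hφ, hφ_eq⟩ := cyclotomic_unit_is_euler_system_value_general ha0
  have two_lt : 2 < p ^ (n + 1) :=
    (hp.two_le.lt_of_ne hodd.symm).trans_le (Nat.le_self_pow n.succ_ne_zero p)
  exact ⟨_, φ, hpS, hφ, hφ_eq ζ (hζ.ne_zero (by omega))
    (hζ.pow_ne_one_of_pos_of_lt two_ne_zero two_lt)⟩
end
end
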